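/- Let G be a connected bridgeless cubic graph in which every 2-factor consists only of 5-cycles. Then every 3-edge-cut of G consists of the three edges incident to a common vertex (i.e., G is cyclically 4-edge-connected). -/

import Mathlib

/-! Multigraphs: vertex type `V`, edge type `E`, incidence map `ends : E → Sym2 V`. -/

namespace Mg

variable {V E : Type}

/-- No loops: no edge has equal endpoints. -/
def NoLoops (ends : E → Sym2 V) : Prop := ∀ e, ¬ (ends e).IsDiag

/-- Cubic: every vertex is incident with exactly three edges. -/
def IsCubic (ends : E → Sym2 V) : Prop := ∀ v, {e | v ∈ ends e}.ncard = 3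

/-- Reachability using only edges in `F`. -/
def Reach (ends : E → Sym2 V) (F : Set E) : V → V → Prop :=
  Relation.ReflTransGen (fun a b => ∃ e ∈ F, ends e = s(a, b))

/-- Connected. -/
def Connected (ends : E → Sym2 V) : Prop := ∀ v w, Reach ends Set.univ v w

/-- Bridgeless: the endpoints of each edge remain joined after its removal. -/
def Bridgeless (ends : E → Sym2 V) : Prop :=
  ∀ e v w, ends e = s(v, w) → Reach ends {f | f ≠ e} v w

/-- A 2-factor: every vertex is incident with exactly two edges of `F`. -/
def IsTwoFactor (ends : E → Sym2 V) (F : Set E) : Prop :=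
  ∀ v, {e | e ∈ F ∧ v ∈ ends e}.ncard = 2

/-- The component of `v` in the spanning subgraph with edge set `F`. -/
def component (ends : E → Sym2 V) (F : Set E) (v : V) : Set V := {w | Reach ends F v w}

/-- Every 2-factor consists only of 5-cycles: each component of any 2-factor
has exactly five vertices. -/
def TwoFactorsAllC5 (ends : E → Sym2 V) : Prop :=
  ∀ F : Set E, IsTwoFactor ends F → ∀ v, (component ends F v).ncard = 5

/-- A perfect matching: every vertex is incident with exactly one edge of `M`. -/
def IsPerfectMatching (ends : E → Sym2 V) (M : Set E) : Prop :=
  ∀ v, ∃! e, e ∈ M ∧ v ∈ ends e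

/-- A cycle of length `n`: `n` distinct vertices and `n` distinct edges, cyclically. -/
def HasCycle (ends : E → Sym2 V) (n : ℕ) : Prop :=
  ∃ (c : ZMod n → V) (f : ZMod n → E), Function.Injective c ∧ Function.Injective f ∧
    ∀ i, ends (f i) = s(c i, c (i + 1))

end Mg

namespace Mg
open Finset
open scoped Classical in
/-- Edges of `F` crossing the vertex set `A`. -/
noncomputable def bd {V E : Type} [Fintype E] (ends : E → Sym2 V) (F : Set E) (A : Set V) :
    Finset E :=
  univ.filter (fun e => e ∈ F ∧ ∃ a b, a ∈ A ∧ b ∉ A ∧ ends e = s(a, b))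

open scoped Classical in
theorem mem_bd {V E : Type} [Fintype E] (ends : E → Sym2 V) (F : Set E) (A : Set V) (e : E) :
    e ∈ bd ends F A ↔ e ∈ F ∧ ∃ a b, a ∈ A ∧ b ∉ A ∧ ends e = s(a, b) := by
  simp [bd]

open scoped Classical in
theorem card_ends {V E : Type} [Fintype V] [Fintype E] (ends : E → Sym2 V)
    (hl : NoLoops ends) (A : Set V) (e : E) (a b : V) (h : ends e = s(a, b)) :
    #{v : V | v ∈ A ∧ v ∈ ends e} = (if a ∈ A then 1 else 0) + (if b ∈ A then 1 else 0) := by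
  have hab : a ≠ b := by
    intro hab
    apply hl e
    rw [h, hab]; simp
  have : (univ.filter fun v : V => v ∈ A ∧ v ∈ ends e) =
      (univ.filter fun v : V => v ∈ A ∧ v = a) ∪ (univ.filter fun v : V => v ∈ A ∧ v = b) := by
    ext v; simp [h]; tauto
  have hc : ∀ a : V, #{v : V | v ∈ A ∧ v = a} = if a ∈ A then 1 else 0 := by
    intro a
    split_ifs with ha
    · rw [Finset.card_eq_one]; refine ⟨a, ?_⟩; ext v; simp; rintro rfl; exact ha
    · rw [Finset.card_eq_zero]; ext v; simp; rintro hv rfl; exact ha hv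
  rw [this, Finset.card_union_of_disjoint, hc, hc]
  rw [Finset.disjoint_left]; intro v; simp; grind

open scoped Classical in
theorem double_count {V E : Type} [Fintype V] [Fintype E] (ends : E → Sym2 V)
    (F : Set E) (A : Set V) (k : ℕ) (hk : ∀ v, {e | e ∈ F ∧ v ∈ ends e}.ncard = k) :
    A.ncard * k = ∑ e with e ∈ F, #{v : V | v ∈ A ∧ v ∈ ends e} := by
  have h := Finset.sum_card_bipartiteAbove_eq_sum_card_bipartiteBelow
    (s := univ.filter (fun v : V => v ∈ A)) (t := univ.filter (fun e : E => e ∈ F))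
    (fun v e => v ∈ ends e)
  simp only [bipartiteAbove, bipartiteBelow, Finset.filter_filter] at h
  rw [← h, Finset.sum_congr rfl (g := fun _ => k)]
  · simp [Set.ncard_eq_toFinset_card']
  · intro v _
    rw [← hk v, Set.ncard_eq_toFinset_card']
    congr 1; ext; simp

open scoped Classical in
theorem parity {V E : Type} [Fintype V] [Fintype E] (ends : E → Sym2 V)
    (hl : NoLoops ends) (F : Set E) (A : Set V) (k : ℕ)
    (hk : ∀ v, {e | e ∈ F ∧ v ∈ ends e}.ncard = k) :
    (A.ncard * k) % 2 = (#(bd ends F A)) % 2 := by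
  rw [double_count ends F A k hk, Finset.sum_nat_mod]
  have : bd ends F A = (univ.filter (fun e : E => e ∈ F)).filter
      (fun e => ∃ a b, a ∈ A ∧ b ∉ A ∧ ends e = s(a, b)) := by
    ext; simp [bd]
  rw [this, Finset.card_filter]
  congr 1
  apply Finset.sum_congr rfl
  intro e _
  obtain ⟨a, b, h⟩ : ∃ a b, ends e = s(a, b) := by
    induction h : ends e using Sym2.ind with | _ a b => exact ⟨a, b, rfl⟩
  rw [card_ends ends hl A e a b h]
  have : (∃ a b, a ∈ A ∧ b ∉ A ∧ ends e = s(a, b)) ↔ (a ∈ A ∧ b ∉ A ∨ b ∈ A ∧ a ∉ A) := by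
    constructor
    · rintro ⟨x, y, hx, hy, hxy⟩
      rw [h] at hxy
      rcases Sym2.eq_iff.1 hxy with ⟨rfl, rfl⟩ | ⟨rfl, rfl⟩
      · left; exact ⟨hx, hy⟩
      · right; exact ⟨hx, hy⟩
    · rintro (⟨h1, h2⟩ | ⟨h1, h2⟩)
      · exact ⟨a, b, h1, h2, h⟩
      · exact ⟨b, a, h1, h2, by rw [h, Sym2.eq_swap]⟩
  by_cases ha : a ∈ A <;> by_cases hb : b ∈ A <;>
    simp only [this] <;> simp [ha, hb]

theorem reach_closed {V E : Type} [Fintype E] (ends : E → Sym2 V) (F : Set E)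
    (A : Set V) (h : ∀ e ∈ F, ∀ a b, ends e = s(a, b) → a ∈ A → b ∈ A) {v w : V}
    (hr : Reach ends F v w) (hv : v ∈ A) : w ∈ A := by
  induction hr with
  | refl => exact hv
  | tail _ hs ih =>
    obtain ⟨e, he, hab⟩ := hs
    exact h e he _ _ hab ih

theorem bd_ne_one {V E : Type} [Fintype V] [Fintype E] (ends : E → Sym2 V)
    (hb : Bridgeless ends) (A : Set V) : #(bd ends Set.univ A) ≠ 1 := by
  intro h
  obtain ⟨e, he⟩ := Finset.card_eq_one.1 h
  have h1 : e ∈ bd ends Set.univ A := by rw [he]; simp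
  obtain ⟨_, a, b, ha, hb', hab⟩ := (mem_bd ..).1 h1
  apply hb'
  refine reach_closed ends _ A ?_ (hb e a b hab) ha
  intro f hf x y hxy hx
  by_contra hy
  have : f ∈ bd ends Set.univ A := (mem_bd ..).2 ⟨trivial, x, y, hx, hy, hxy⟩
  rw [he] at this
  exact hf (by simpa using this)

theorem bd_pos {V E : Type} [Fintype V] [Fintype E] (ends : E → Sym2 V)
    (hb : Connected ends) (A : Set V) {v w : V} (hv : v ∈ A) (hw : w ∉ A) :
    bd ends Set.univ A ≠ ∅ := by
  intro h
  apply hw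
  refine reach_closed ends _ A ?_ (hb v w) hv
  intro f hf x y hxy hx
  by_contra hy
  have : f ∈ bd ends Set.univ A := (mem_bd ..).2 ⟨trivial, x, y, hx, hy, hxy⟩
  simp [h] at this

theorem cubic' {V E : Type} [Fintype V] [Fintype E] {ends : E → Sym2 V}
    (hc : IsCubic ends) : ∀ v, {e | e ∈ (Set.univ : Set E) ∧ v ∈ ends e}.ncard = 3 := by
  simpa [IsCubic] using hc

open scoped Classical in
/-- Counting step of Plesnik's theorem. -/
theorem count_bound {V E ι : Type} [Fintype V] [Fintype E] (ends : E → Sym2 V)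
    (hl : NoLoops ends) (hc : IsCubic ends) (hb : Bridgeless ends) (f g : E) (u : Set V)
    (I : Finset ι) (C : ι → Set V) (hdis : ∀ i ∈ I, ∀ j ∈ I, ∀ v, v ∈ C i → v ∈ C j → i = j)
    (hodd : ∀ i ∈ I, Odd (C i).ncard) (hCu : ∀ i ∈ I, ∀ v ∈ C i, v ∉ u)
    (hbd : ∀ i ∈ I, ∀ e, e ≠ f → e ≠ g → ∀ a b, ends e = s(a, b) → a ∈ C i → b ∉ C i → b ∈ u) :
    3 * #I ≤ 3 * u.ncard + 4 := by
  have h3 : ∀ i ∈ I, 3 ≤ #(bd ends Set.univ (C i)) := by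
    intro i hi
    have h1 := parity ends hl Set.univ (C i) 3 (cubic' hc)
    have h2 := bd_ne_one ends hb (C i)
    have := hodd i hi
    rw [Nat.odd_iff] at this
    omega
  have hs : 3 * #I ≤ ∑ i ∈ I, #(bd ends Set.univ (C i)) := by
    rw [mul_comm, ← smul_eq_mul]; exact Finset.card_nsmul_le_sum _ _ _ h3
  have hdc := Finset.sum_card_bipartiteAbove_eq_sum_card_bipartiteBelow
    (s := I) (t := (univ : Finset E)) (fun i e => e ∈ bd ends Set.univ (C i))
  simp only [bipartiteAbove, bipartiteBelow, Finset.filter_mem_eq_inter, Finset.univ_inter] at hdc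
  rw [hdc] at hs
  have key : ∀ e : E, #{i ∈ I | e ∈ bd ends Set.univ (C i)} ≤
      #{v : V | v ∈ u ∧ v ∈ ends e} + (if e = f then 2 else 0) + (if e = g then 2 else 0) := by
    intro e
    obtain ⟨a, b, h⟩ : ∃ a b, ends e = s(a, b) := by
      induction h : ends e using Sym2.ind with | _ a b => exact ⟨a, b, rfl⟩
    have hmem : ∀ i, e ∈ bd ends Set.univ (C i) → (a ∈ C i ∧ b ∉ C i ∨ b ∈ C i ∧ a ∉ C i) := by
      intro i hi
      obtain ⟨_, x, y, hx, hy, hxy⟩ := (mem_bd ..).1 hi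
      rw [h] at hxy
      rcases Sym2.eq_iff.1 hxy with ⟨rfl, rfl⟩ | ⟨rfl, rfl⟩
      · left; exact ⟨hx, hy⟩
      · right; exact ⟨hx, hy⟩
    have hone : ∀ x, #{i ∈ I | x ∈ C i} ≤ 1 := by
      intro x
      rw [Finset.card_le_one]
      intro i hi j hj
      simp only [Finset.mem_filter] at hi hj
      exact hdis i hi.1 j hj.1 x hi.2 hj.2
    have hsub : I.filter (fun i => e ∈ bd ends Set.univ (C i)) ⊆
        I.filter (fun i => a ∈ C i) ∪ I.filter (fun i => b ∈ C i) := by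
      intro i hi
      simp only [Finset.mem_filter, Finset.mem_union] at hi ⊢
      have := hmem i hi.2
      tauto
    have htwo := (Finset.card_le_card hsub).trans (Finset.card_union_le _ _)
    have ha1 := hone a
    have hb1 := hone b
    by_cases hef : e = f
    · simp only [hef, if_true] at htwo ⊢; omega
    by_cases heg : e = g
    · simp only [heg, if_true] at htwo ⊢; omega
    simp only [hef, heg, if_false, add_zero]
    rw [card_ends ends hl u e a b h]
    by_cases hau : a ∈ u
    · have : I.filter (fun i => a ∈ C i) = ∅ := by
        apply Finset.filter_eq_empty_iff.2
        intro i hi hai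
        exact hCu i hi a hai hau
      rw [this] at htwo
      simp [hau] at htwo ⊢
      omega
    · by_cases hbu : b ∈ u
      · have : I.filter (fun i => b ∈ C i) = ∅ := by
          apply Finset.filter_eq_empty_iff.2
          intro i hi hai
          exact hCu i hi b hai hbu
        rw [this] at htwo
        simp [hbu] at htwo ⊢
        omega
      · have : I.filter (fun i => e ∈ bd ends Set.univ (C i)) = ∅ := by
          apply Finset.filter_eq_empty_iff.2
          intro i hi hai
          rcases hmem i hai with ⟨h1, h2⟩ | ⟨h1, h2⟩
          · exact hbu (hbd i hi e hef heg a b h h1 h2)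
          · exact hau (hbd i hi e hef heg b a (by rw [h, Sym2.eq_swap]) h1 h2)
        simp [this]
  have hd := double_count ends Set.univ u 3 (cubic' hc)
  simp only [Set.mem_univ, Finset.filter_true] at hd
  have := Finset.sum_le_sum (s := univ) (fun e _ => key e)
  simp only [Finset.sum_add_distrib, Finset.sum_ite_eq', Finset.mem_univ, if_true, ← hd] at this
  omega

open scoped Classical in
/-- Plesnik: any two edges lie in a common 2-factor. -/
theorem plesnik {V E : Type} [Fintype V] [Fintype E] (ends : E → Sym2 V)
    (hl : NoLoops ends) (hc : IsCubic ends) (hb : Bridgeless ends) (f g : E) :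
    ∃ F : Set E, IsTwoFactor ends F ∧ f ∈ F ∧ g ∈ F := by
  let H : SimpleGraph V :=
    { Adj := fun a b => a ≠ b ∧ ∃ e, e ≠ f ∧ e ≠ g ∧ ends e = s(a, b)
      symm := ⟨by
        rintro a b ⟨h, e, h1, h2, h3⟩
        exact ⟨h.symm, e, h1, h2, by rw [h3, Sym2.eq_swap]⟩⟩
      loopless := ⟨fun a h => h.1 rfl⟩ }
  have hM : ∃ M : H.Subgraph, M.IsPerfectMatching := by
    rw [SimpleGraph.tutte]
    intro u hu
    rw [SimpleGraph.IsTutteViolator] at hu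
    set K := ((⊤ : H.Subgraph).deleteVerts u) with hK
    have hpar := SimpleGraph.odd_ncard_oddComponents (G := K.coe)
    have hVeven : Even (Nat.card V) := by
      have := parity ends hl Set.univ Set.univ 3 (cubic' hc)
      have h0 : bd ends Set.univ Set.univ = ∅ := by
        ext e; simp [mem_bd]
      rw [h0, Set.ncard_univ, Finset.card_empty] at this
      rw [Nat.even_iff]
      omega
    have hcard : Nat.card K.verts + u.ncard = Nat.card V := by
      have : K.verts = uᶜ := by ext; simp [hK]
      rw [this, Nat.card_coe_set_eq, add_comm, Set.ncard_add_ncard_compl]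
    have hge : u.ncard + 2 ≤ K.coe.oddComponents.ncard := by
      have h1 : Odd (K.coe.oddComponents.ncard) ↔ Odd u.ncard := by
        rw [hpar, ← Nat.not_even_iff_odd, ← Nat.not_even_iff_odd]
        rw [← hcard, Nat.even_add] at hVeven
        tauto
      by_contra hcon
      have : K.coe.oddComponents.ncard = u.ncard + 1 := by omega
      rw [this] at h1
      simp only [Nat.odd_iff] at h1
      omega
    have hmv : ∀ x : V, x ∉ u → x ∈ K.verts := by intro x hx; simp [hK, hx]
    have hcb := count_bound ends hl hc hb f g u
      (K.coe.oddComponents.toFinite.toFinset) (fun c => Subtype.val '' c.supp) ?_ ?_ ?_ ?_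
    · rw [← Set.ncard_eq_toFinset_card] at hcb
      omega
    · rintro i - j - v ⟨x, hx, rfl⟩ ⟨y, hy, hxy⟩
      have := Subtype.ext hxy
      subst this
      exact SimpleGraph.ConnectedComponent.eq_of_common_vertex hx hy
    · intro i hi
      rw [Set.ncard_image_of_injective _ Subtype.val_injective]
      simpa using hi
    · rintro i - v ⟨x, hx, rfl⟩
      have := x.2
      simp [hK] at this
      exact this
    · rintro i - e hef heg a b hab ⟨x, hx, rfl⟩ hbC
      by_contra hbu
      apply hbC
      refine ⟨⟨b, hmv b hbu⟩, ?_, rfl⟩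
      have hne : (x : V) ≠ b := by
        intro h
        apply hl e
        rw [hab, h]; simp
      have hxu : (x : V) ∉ u := by
        have := x.2
        simp [hK] at this
        exact this
      have hadj : K.coe.Adj x ⟨b, hmv b hbu⟩ := by
        have : H.Adj x b := ⟨hne, e, hef, heg, hab⟩
        simp [hK, this, hxu, hbu]
      exact (i.mem_supp_congr_adj hadj).1 hx
  obtain ⟨M, hM⟩ := hM
  rw [SimpleGraph.Subgraph.isPerfectMatching_iff] at hM
  have hex : ∀ p : Sym2 V, ∃ e : E, p ∈ M.edgeSet → e ≠ f ∧ e ≠ g ∧ ends e = p := by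
    intro p
    induction p using Sym2.ind with | _ a b =>
    by_cases h : M.Adj a b
    · obtain ⟨_, e, he⟩ := M.adj_sub h
      exact ⟨e, fun _ => he⟩
    · exact ⟨f, fun h' => absurd (by simpa using h') h⟩
  choose φ hφ using hex
  refine ⟨{e | ¬ ∃ p ∈ M.edgeSet, φ p = e}, ?_, ?_, ?_⟩
  · intro v
    obtain ⟨w, hw, huniq⟩ := hM v
    have hin : s(v, w) ∈ M.edgeSet := by simpa using hw
    obtain ⟨-, -, hends⟩ := hφ _ hin
    have : {e | e ∈ {e | ¬ ∃ p ∈ M.edgeSet, φ p = e} ∧ v ∈ ends e} =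
        {e | v ∈ ends e} \ {φ s(v, w)} := by
      ext e
      simp only [Set.mem_ofPred_eq, Set.mem_sdiff, Set.mem_singleton_iff]
      constructor
      · rintro ⟨h1, h2⟩
        exact ⟨h2, fun h => h1 ⟨_, hin, h.symm⟩⟩
      · rintro ⟨h1, h2⟩
        refine ⟨?_, h1⟩
        rintro ⟨p, hp, rfl⟩
        rw [(hφ p hp).2.2] at h1
        obtain ⟨y, rfl⟩ := h1
        have : y = w := huniq y (by simpa using hp)
        subst this
        exact h2 rfl
    rw [this, Set.ncard_sdiff_singleton_of_mem (by simp [hends]), hc v]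
  · rintro ⟨p, hp, h⟩; exact (hφ p hp).1 h
  · rintro ⟨p, hp, h⟩; exact (hφ p hp).2.1 h

/-- `A` is closed under the edges of `F`. -/
def Closed {V E : Type} (ends : E → Sym2 V) (F : Set E) (A : Set V) : Prop :=
  ∀ e ∈ F, ∀ a b, ends e = s(a, b) → a ∈ A → b ∈ A

theorem closed_component {V E : Type} (ends : E → Sym2 V) (F : Set E) (v : V) :
    Closed ends F (component ends F v) := by
  intro e he a b hab ha
  exact Relation.ReflTransGen.tail ha ⟨e, he, hab⟩

theorem Closed.sdiff {V E : Type} {ends : E → Sym2 V} {F : Set E} {A K : Set V}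
    (hA : Closed ends F A) (hK : Closed ends F K) : Closed ends F (A \ K) := by
  intro e he a b hab ha
  exact ⟨hA e he a b hab ha.1, fun hb => ha.2 (hK e he b a (by rw [hab, Sym2.eq_swap]) hb)⟩

theorem closed_dvd {V E : Type} [Fintype V] [Fintype E] (ends : E → Sym2 V)
    (h5 : TwoFactorsAllC5 ends) (F : Set E) (hF : IsTwoFactor ends F) :
    ∀ (n : ℕ) (A : Set V), A.ncard = n → Closed ends F A → 5 ∣ n := by
  intro n
  induction n using Nat.strong_induction_on with
  | _ n ih =>
    intro A hn hA
    rcases A.eq_empty_or_nonempty with rfl | ⟨v, hv⟩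
    · simp at hn; subst hn; simp
    · have hsub : component ends F v ⊆ A := by
        intro w hw
        exact reach_closed ends F A hA hw hv
      have hK := h5 F hF v
      have h1 := Set.ncard_sdiff_add_ncard_of_subset hsub
      have := ih (A \ component ends F v).ncard (by omega) _ rfl
        (hA.sdiff (closed_component ends F v))
      omega

theorem crossing {V E : Type} [Fintype V] [Fintype E] (ends : E → Sym2 V)
    (hl : NoLoops ends) (h5 : TwoFactorsAllC5 ends) (F : Set E) (hF : IsTwoFactor ends F)
    (A : Set V) (e f : E) (hef : e ≠ f) (hbd : ∀ g, g ∈ bd ends F A ↔ g = e ∨ g = f)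
    {x x' y y' : V} (he : ends e = s(x, x')) (hx : x ∈ A) (hx' : x' ∉ A)
    (hf : ends f = s(y, y')) (hy : y ∈ A) (hy' : y' ∉ A) :
    ∃ K : Set V, Closed ends F K ∧ x ∈ K ∧ y ∈ K ∧
      (A ∩ K).ncard % 5 = A.ncard % 5 ∧ 1 ≤ (A ∩ K).ncard ∧ (A ∩ K).ncard ≤ 4 := by
  have heF : e ∈ F := ((mem_bd ..).1 ((hbd e).2 (Or.inl rfl))).1
  have hfF : f ∈ F := ((mem_bd ..).1 ((hbd f).2 (Or.inr rfl))).1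
  have hK := closed_component ends F x
  have hK5 := h5 F hF x
  have hxK : x ∈ component ends F x := Relation.ReflTransGen.refl
  set K := component ends F x
  have hx'K : x' ∈ K := hK e heF x x' he hxK
  have hsub : ∀ g, g ∈ bd ends F (A ∩ K) → g ∈ bd ends F A := by
    intro g hg
    obtain ⟨hgF, a, b, ha, hb, hab⟩ := (mem_bd ..).1 hg
    exact (mem_bd ..).2 ⟨hgF, a, b, ha.1, fun h => hb ⟨h, hK g hgF a b hab ha.2⟩, hab⟩
  have heB : e ∈ bd ends F (A ∩ K) :=
    (mem_bd ..).2 ⟨heF, x, x', ⟨hx, hxK⟩, fun h => hx' h.1, he⟩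
  have hfB : f ∈ bd ends F (A ∩ K) := by
    by_contra hcon
    have : bd ends F (A ∩ K) = {e} := by
      ext g
      simp only [Finset.mem_singleton]
      constructor
      · intro hg
        rcases (hbd g).1 (hsub g hg) with rfl | rfl
        · rfl
        · exact absurd hg hcon
      · rintro rfl; exact heB
    have hp := parity ends hl F (A ∩ K) 2 hF
    rw [this] at hp
    simp at hp
  have hyK : y ∈ K := by
    obtain ⟨_, a, b, ha, hb, hab⟩ := (mem_bd ..).1 hfB
    rw [hf] at hab
    rcases Sym2.eq_iff.1 hab with ⟨rfl, rfl⟩ | ⟨rfl, rfl⟩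
    · exact ha.2
    · exact absurd ha.1 hy'
  have hcl : Closed ends F (A \ K) := by
    intro g hg a b hab ha
    have hbK : b ∉ K := fun hb => ha.2 (hK g hg b a (by rw [hab, Sym2.eq_swap]) hb)
    refine ⟨?_, hbK⟩
    by_contra hbA
    have := (hbd g).1 ((mem_bd ..).2 ⟨hg, a, b, ha.1, hbA, hab⟩)
    have haK : a ∈ K := by
      rcases this with rfl | rfl
      · rw [he] at hab
        rcases Sym2.eq_iff.1 hab with ⟨rfl, rfl⟩ | ⟨rfl, rfl⟩ <;> assumption
      · rw [hf] at hab
        rcases Sym2.eq_iff.1 hab with ⟨rfl, rfl⟩ | ⟨rfl, rfl⟩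
        · assumption
        · exact absurd hyK hbK
    exact ha.2 haK
  have hd := closed_dvd ends h5 F hF _ _ rfl hcl
  have hs := Set.ncard_inter_add_ncard_sdiff_eq_ncard A K
  have hlt : (A ∩ K).ncard < K.ncard := by
    refine Set.ncard_lt_ncard ?_ (Set.toFinite _)
    refine ⟨Set.inter_subset_right, fun h => hx' (h hx'K).1⟩
  have hpos : 0 < (A ∩ K).ncard := (Set.ncard_pos).2 ⟨x, hx, hxK⟩
  exact ⟨K, hK, hxK, hyK, by omega, by omega, by omega⟩

theorem edges_at {V E : Type} [Fintype E] {ends : E → Sym2 V} (hc : IsCubic ends)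
    {x : V} {e f g h : E} (hef : e ≠ f) (heg : e ≠ g) (hfg : f ≠ g)
    (he : x ∈ ends e) (hf : x ∈ ends f) (hg : x ∈ ends g) (hh : x ∈ ends h) :
    h = e ∨ h = f ∨ h = g := by
  have h3 : ({e, f, g} : Set E).ncard = 3 := Set.ncard_eq_three.2 ⟨e, f, g, hef, heg, hfg, rfl⟩
  have : ({e, f, g} : Set E) = {e | x ∈ ends e} := by
    refine Set.eq_of_subset_of_ncard_le ?_ ?_ (Set.toFinite _)
    · rintro a (rfl | rfl | rfl) <;> assumption
    · rw [h3]; exact (hc x).le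
  have hm : h ∈ ({e, f, g} : Set E) := by rw [this]; exact hh
  simpa using hm

theorem edges_at_two {V E : Type} [Fintype E] {ends : E → Sym2 V} {F : Set E}
    (hF : IsTwoFactor ends F)
    {x : V} {e f h : E} (hef : e ≠ f) (heF : e ∈ F) (hfF : f ∈ F) (hhF : h ∈ F)
    (he : x ∈ ends e) (hf : x ∈ ends f) (hh : x ∈ ends h) :
    h = e ∨ h = f := by
  have h3 : ({e, f} : Set E).ncard = 2 := Set.ncard_pair hef
  have : ({e, f} : Set E) = {e | e ∈ F ∧ x ∈ ends e} := by
    refine Set.eq_of_subset_of_ncard_le ?_ ?_ (Set.toFinite _)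
    · rintro a (rfl | rfl)
      · exact ⟨heF, he⟩
      · exact ⟨hfF, hf⟩
    · rw [h3]; exact (hF x).le
  have hm : h ∈ ({e, f} : Set E) := by rw [this]; exact ⟨hhF, hh⟩
  simpa using hm

/-- There are no 2-edge-cuts. -/
theorem no_two {V E : Type} [Fintype V] [Fintype E] (ends : E → Sym2 V)
    (hl : NoLoops ends) (hc : IsCubic ends) (hb : Bridgeless ends)
    (h5 : TwoFactorsAllC5 ends) (A : Set V) (e f : E) (hef : e ≠ f)
    (hbd : ∀ g, g ∈ bd ends Set.univ A ↔ g = e ∨ g = f) : False := by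
  obtain ⟨_, x, x', hx, hx', he⟩ := (mem_bd ..).1 ((hbd e).2 (Or.inl rfl))
  obtain ⟨_, y, y', hy, hy', hf⟩ := (mem_bd ..).1 ((hbd f).2 (Or.inr rfl))
  obtain ⟨F, hF, heF, hfF⟩ := plesnik ends hl hc hb e f
  have hmono : ∀ (F : Set E) g, g ∈ bd ends F A ↔ g ∈ F ∧ (g = e ∨ g = f) := by
    intro F g
    rw [← hbd g, mem_bd, mem_bd]; simp
  obtain ⟨K, -, -, -, h1, h2, h3⟩ := crossing ends hl h5 F hF A e f hef (by
    intro g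
    rw [hmono F g]
    constructor
    · exact fun h => h.2
    · rintro (rfl | rfl)
      · exact ⟨heF, Or.inl rfl⟩
      · exact ⟨hfF, Or.inr rfl⟩) he hx hx' hf hy hy'
  have hxe : x ∈ ends e := by rw [he]; simp
  obtain ⟨p, q, hpq, hpe, hqe, hp, hq⟩ : ∃ p q, p ≠ q ∧ p ≠ e ∧ q ≠ e ∧ x ∈ ends p ∧ x ∈ ends q := by
    have : ({e | x ∈ ends e} \ {e}).ncard = 2 := by
      rw [Set.ncard_sdiff_singleton_of_mem (by exact hxe), hc x]
    obtain ⟨p, q, hpq, h⟩ := Set.ncard_eq_two.1 this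
    have hp : p ∈ {e | x ∈ ends e} \ {e} := by rw [h]; simp
    have hq : q ∈ {e | x ∈ ends e} \ {e} := by rw [h]; simp
    exact ⟨p, q, hpq, hp.2, hq.2, hp.1, hq.1⟩
  obtain ⟨F', hF', hpF, hqF⟩ := plesnik ends hl hc hb p q
  have heF' : e ∉ F' := by
    intro h
    rcases edges_at_two hF' hpq hpF hqF h hp hq hxe with h | h
    · exact hpe h.symm
    · exact hqe h.symm
  have hpar := parity ends hl F' A 2 hF'
  have hfF' : f ∉ F' := by
    intro hfF'
    have : bd ends F' A = {f} := by
      ext g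
      rw [hmono]
      simp only [Finset.mem_singleton]
      constructor
      · rintro ⟨h, rfl | rfl⟩
        · exact absurd h heF'
        · rfl
      · rintro rfl; exact ⟨hfF', Or.inr rfl⟩
    rw [this] at hpar
    simp at hpar
  have hcl : Closed ends F' A := by
    intro g hg a b hab ha
    by_contra hbA
    have hgb : g ∈ bd ends F' A := (mem_bd ..).2 ⟨hg, a, b, ha, hbA, hab⟩
    rw [hmono] at hgb
    rcases hgb.2 with rfl | rfl
    · exact heF' hg
    · exact hfF' hg
  have := closed_dvd ends h5 F' hF' _ _ rfl hcl
  omega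

/-- A pair of edges of a 3-edge-cut. -/
theorem pair {V E : Type} [Fintype V] [Fintype E] (ends : E → Sym2 V)
    (hl : NoLoops ends) (hc : IsCubic ends) (hb : Bridgeless ends)
    (h5 : TwoFactorsAllC5 ends) (A : Set V) (e f k : E) (hef : e ≠ f) (hek : e ≠ k) (hfk : f ≠ k)
    (hbd : ∀ g, g ∈ bd ends Set.univ A ↔ g = e ∨ g = f ∨ g = k)
    {x x' y y' : V} (he : ends e = s(x, x')) (hx : x ∈ A) (hx' : x' ∉ A)
    (hf : ends f = s(y, y')) (hy : y ∈ A) (hy' : y' ∉ A) :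
    A.ncard % 5 ≠ 0 ∧ (A.ncard % 5 = 1 → x = y) ∧
      (A.ncard % 5 = 2 → x ≠ y ∧ ∃ g, ends g = s(x, y)) := by
  classical
  obtain ⟨F, hF, heF, hfF⟩ := plesnik ends hl hc hb e f
  have hmono : ∀ g, g ∈ bd ends F A ↔ g ∈ F ∧ (g = e ∨ g = f ∨ g = k) := by
    intro g
    rw [← hbd g, mem_bd, mem_bd]; simp
  have hkF : k ∉ F := by
    intro hkF
    have hpar := parity ends hl F A 2 hF
    have : #(bd ends F A) = 3 := by
      rw [Finset.card_eq_three]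
      refine ⟨e, f, k, hef, hek, hfk, ?_⟩
      ext g
      rw [hmono]
      simp only [Finset.mem_insert, Finset.mem_singleton]
      constructor
      · exact fun h => h.2
      · rintro (rfl | rfl | rfl) <;> simp [*]
    rw [this] at hpar
    omega
  have hbdF : ∀ g, g ∈ bd ends F A ↔ g = e ∨ g = f := by
    intro g
    rw [hmono g]
    constructor
    · rintro ⟨h, rfl | rfl | rfl⟩
      · exact Or.inl rfl
      · exact Or.inr rfl
      · exact absurd h hkF
    · rintro (rfl | rfl) <;> simp [*]
  obtain ⟨K, hK, hxK, hyK, h1, h2, h3⟩ := crossing ends hl h5 F hF A e f hef hbdF he hx hx' hf hy hy'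
  refine ⟨by omega, ?_, ?_⟩
  · intro h
    have : (A ∩ K).ncard = 1 := by omega
    obtain ⟨z, hz⟩ := Set.ncard_eq_one.1 this
    have hxz : x ∈ A ∩ K := ⟨hx, hxK⟩
    have hyz : y ∈ A ∩ K := ⟨hy, hyK⟩
    rw [hz] at hxz hyz
    exact hxz.trans hyz.symm
  · intro h
    have h2 : (A ∩ K).ncard = 2 := by omega
    have hxe : x ∈ ends e := by rw [he]; simp
    have hyf : y ∈ ends f := by rw [hf]; simp
    have hne : x ≠ y := by
      rintro rfl
      obtain ⟨z, hz, hzx⟩ := Set.exists_ne_of_one_lt_ncard (s := A ∩ K) (by omega) x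
      obtain ⟨w, hw⟩ : ∃ w, A ∩ K = {x, w} ∧ w ≠ x := by
        refine ⟨z, ?_, hzx⟩
        symm
        refine Set.eq_of_subset_of_ncard_le ?_ ?_ (Set.toFinite _)
        · rintro a (rfl | rfl)
          · exact ⟨hx, hxK⟩
          · exact hz
        · rw [h2, Set.ncard_pair hzx.symm]
      obtain ⟨g, hg⟩ : {e | e ∈ F ∧ z ∈ ends e}.Nonempty := by
        apply Set.nonempty_of_ncard_ne_zero
        rw [hF z]; decide
      obtain ⟨hgF, hzg⟩ := hg
      obtain ⟨t, ht⟩ := hzg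
      have htK : t ∈ K := hK g hgF z t ht hz.2
      have hgef : ¬ (g = e ∨ g = f) := by
        rintro (rfl | rfl)
        · rw [he] at ht
          rcases Sym2.eq_iff.1 ht with ⟨rfl, rfl⟩ | ⟨rfl, rfl⟩
          · exact hzx rfl
          · exact hx' hz.1
        · rw [hf] at ht
          rcases Sym2.eq_iff.1 ht with ⟨rfl, rfl⟩ | ⟨rfl, rfl⟩
          · exact hzx rfl
          · exact hy' hz.1
      have htA : t ∈ A := by
        by_contra htA
        exact hgef ((hbdF g).1 ((mem_bd ..).2 ⟨hgF, z, t, hz.1, htA, ht⟩))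
      have htm : t ∈ A ∩ K := ⟨htA, htK⟩
      rw [hw.1] at htm hz
      have hzw : z = w := by
        rcases hz with h | h
        · exact absurd h hzx
        · exact h
      rcases htm with rfl | h
      · exact hgef (edges_at_two hF hef heF hfF hgF hxe hyf (by rw [ht]; simp))
      · have h : t = w := h
        apply hl g
        rw [ht, h, hzw]; simp
    refine ⟨hne, ?_⟩
    have hw : A ∩ K = {x, y} := by
      symm
      refine Set.eq_of_subset_of_ncard_le ?_ ?_ (Set.toFinite _)
      · rintro a (rfl | rfl)
        · exact ⟨hx, hxK⟩
        · exact ⟨hy, hyK⟩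
      · rw [h2, Set.ncard_pair hne]
    obtain ⟨g, ⟨hgF, hxg⟩, hge⟩ := Set.exists_ne_of_one_lt_ncard
      (s := {e | e ∈ F ∧ x ∈ ends e}) (by rw [hF x]; decide) e
    obtain ⟨t, ht⟩ := hxg
    have htK : t ∈ K := hK g hgF x t ht hxK
    have htA : t ∈ A := by
      by_contra htA
      rcases (hbdF g).1 ((mem_bd ..).2 ⟨hgF, x, t, hx, htA, ht⟩) with h | rfl
      · exact hge h
      · rw [hf] at ht
        rcases Sym2.eq_iff.1 ht with ⟨rfl, rfl⟩ | ⟨rfl, rfl⟩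
        · exact hne rfl
        · exact hy' hx
    have htm : t ∈ A ∩ K := ⟨htA, htK⟩
    rw [hw] at htm
    rcases htm with rfl | h
    · exfalso
      apply hl g
      rw [ht]; simp
    · have h : t = y := h
      exact ⟨g, by rw [ht, h]⟩

set_option maxHeartbeats 1000000 in
theorem core {V E : Type} [Fintype V] [Fintype E] (ends : E → Sym2 V)
    (hl : NoLoops ends) (hc : IsCubic ends) (hb : Bridgeless ends) (hconn : Connected ends)
    (h5 : TwoFactorsAllC5 ends) (A : Set V) (e f k : E) (hef : e ≠ f) (hek : e ≠ k) (hfk : f ≠ k)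
    (hbd : ∀ g, g ∈ bd ends Set.univ A ↔ g = e ∨ g = f ∨ g = k) :
    A.ncard % 5 ≠ 0 ∧ (A.ncard % 5 = 1 ∨ A.ncard % 5 = 2 →
      ∃ v, v ∈ ends e ∧ v ∈ ends f ∧ v ∈ ends k) := by
  obtain ⟨_, x, x', hx, hx', he⟩ := (mem_bd ..).1 ((hbd e).2 (by simp))
  obtain ⟨_, y, y', hy, hy', hf⟩ := (mem_bd ..).1 ((hbd f).2 (by simp))
  obtain ⟨_, z, z', hz, hz', hk⟩ := (mem_bd ..).1 ((hbd k).2 (by simp))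
  obtain ⟨h0, h1, h2⟩ := pair ends hl hc hb h5 A e f k hef hek hfk hbd he hx hx' hf hy hy'
  obtain ⟨-, h1', h2'⟩ := pair ends hl hc hb h5 A e k f hek hef hfk.symm
    (by intro g; rw [hbd]; tauto) he hx hx' hk hz hz'
  obtain ⟨-, h1'', h2''⟩ := pair ends hl hc hb h5 A f k e hfk hef.symm hek.symm
    (by intro g; rw [hbd]; tauto) hf hy hy' hk hz hz'
  refine ⟨h0, ?_⟩
  rintro (h | h)
  · have hxy := h1 h
    have hxz := h1' h
    exact ⟨x, by simp [he], by simp [hf, hxy], by simp [hk, hxz]⟩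
  · exfalso
    obtain ⟨hxy, a, ha⟩ := h2 h
    obtain ⟨hxz, b, hb'⟩ := h2' h
    obtain ⟨hyz, c, hc'⟩ := h2'' h
    have hT : A ⊆ {x, y, z} := by
      by_contra hcon
      obtain ⟨t, htA, htT⟩ := Set.not_subset.1 hcon
      have hne := bd_pos ends hconn (A \ {x, y, z}) (v := t) (w := x) ⟨htA, htT⟩ (by simp)
      obtain ⟨g, hg⟩ := Finset.nonempty_iff_ne_empty.2 hne
      obtain ⟨_, p, q, hp, hq, hpq⟩ := (mem_bd ..).1 hg
      have hpx : p ≠ x := by rintro rfl; exact hp.2 (by simp)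
      have hpy : p ≠ y := by rintro rfl; exact hp.2 (by simp)
      have hpz : p ≠ z := by rintro rfl; exact hp.2 (by simp)
      have hpA := hp.1
      have hpx' : p ≠ x' := by rintro rfl; exact hx' hpA
      have hpy' : p ≠ y' := by rintro rfl; exact hy' hpA
      have hpz' : p ≠ z' := by rintro rfl; exact hz' hpA
      have hpg : p ∈ ends g := by rw [hpq]; simp
      have hgne : g ≠ e ∧ g ≠ f ∧ g ≠ k ∧ g ≠ a ∧ g ≠ b ∧ g ≠ c := by
        refine ⟨?_, ?_, ?_, ?_, ?_, ?_⟩ <;> rintro rfl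
        · rw [he] at hpg; rcases Sym2.mem_iff.1 hpg with h | h <;> contradiction
        · rw [hf] at hpg; rcases Sym2.mem_iff.1 hpg with h | h <;> contradiction
        · rw [hk] at hpg; rcases Sym2.mem_iff.1 hpg with h | h <;> contradiction
        · rw [ha] at hpg; rcases Sym2.mem_iff.1 hpg with h | h <;> contradiction
        · rw [hb'] at hpg; rcases Sym2.mem_iff.1 hpg with h | h <;> contradiction
        · rw [hc'] at hpg; rcases Sym2.mem_iff.1 hpg with h | h <;> contradiction
      have hab : a ≠ b := by
        rintro rfl; rw [ha, Sym2.eq_iff] at hb'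
        rcases hb' with ⟨h1, h2⟩ | ⟨h1, h2⟩
        · exact hyz h2
        · exact hxz h1
      have hac : a ≠ c := by
        rintro rfl; rw [ha, Sym2.eq_iff] at hc'
        rcases hc' with ⟨h1, h2⟩ | ⟨h1, h2⟩
        · exact hxy h1
        · exact hxz h1
      have hbc : b ≠ c := by
        rintro rfl; rw [hb', Sym2.eq_iff] at hc'
        rcases hc' with ⟨h1, h2⟩ | ⟨h1, h2⟩
        · exact hxy h1
        · exact hxz h1
      have hnA : ∀ g, (g = e ∨ g = f ∨ g = k) → g ≠ a ∧ g ≠ b ∧ g ≠ c := by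
        intro g hg
        obtain ⟨_, p, q, hp, hq, hpq⟩ := (mem_bd ..).1 ((hbd g).2 hg)
        have hqg : q ∈ ends g := by rw [hpq]; simp
        refine ⟨?_, ?_, ?_⟩ <;> rintro rfl
        · rw [ha] at hqg; rcases Sym2.mem_iff.1 hqg with rfl | rfl <;> contradiction
        · rw [hb'] at hqg; rcases Sym2.mem_iff.1 hqg with rfl | rfl <;> contradiction
        · rw [hc'] at hqg; rcases Sym2.mem_iff.1 hqg with rfl | rfl <;> contradiction
      have hqg : q ∈ ends g := by rw [hpq]; simp
      by_cases hqA : q ∈ A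
      · have hqT : q = x ∨ q = y ∨ q = z := by
          by_contra hcon2
          exact hq ⟨hqA, by simpa using hcon2⟩
        rcases hqT with rfl | rfl | rfl
        · have := edges_at hc (h := g) (hnA e (by simp)).1 (hnA e (by simp)).2.1 hab (x := q)
            (by simp [he]) (by simp [ha]) (by simp [hb']) hqg
          rcases this with h | h | h <;> simp [h] at hgne
        · have := edges_at hc (h := g) (hnA f (by simp)).1 (hnA f (by simp)).2.2 hac (x := q)
            (by simp [hf]) (by simp [ha]) (by simp [hc']) hqg
          rcases this with h | h | h <;> simp [h] at hgne
        · have := edges_at hc (h := g) (hnA k (by simp)).2.1 (hnA k (by simp)).2.2 hbc (x := q)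
            (by simp [hk]) (by simp [hb']) (by simp [hc']) hqg
          rcases this with h | h | h <;> simp [h] at hgne
      · have := (hbd g).1 ((mem_bd ..).2 ⟨trivial, p, q, hpA, hqA, hpq⟩)
        rcases this with h | h | h <;> simp [h] at hgne
    have hAT : A = {x, y, z} := by
      apply hT.antisymm
      rintro w (rfl | rfl | rfl) <;> assumption
    have h3 : A.ncard = 3 := Set.ncard_eq_three.2 ⟨x, y, z, hxy, hxz, hyz, hAT⟩
    omega

theorem bd_compl {V E : Type} [Fintype E] (ends : E → Sym2 V) (F : Set E) (A : Set V) (g : E) :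
    g ∈ bd ends F Aᶜ ↔ g ∈ bd ends F A := by
  rw [mem_bd, mem_bd]
  constructor
  · rintro ⟨h, a, b, ha, hb, hab⟩
    exact ⟨h, b, a, by simpa using hb, ha, by rw [hab, Sym2.eq_swap]⟩
  · rintro ⟨h, a, b, ha, hb, hab⟩
    exact ⟨h, b, a, hb, by simpa using ha, by rw [hab, Sym2.eq_swap]⟩

end Mg

theorem stmt9 {V E : Type} [Fintype V] [Fintype E] (ends : E → Sym2 V)
    (hl : Mg.NoLoops ends) (hc : Mg.IsCubic ends) (hb : Mg.Bridgeless ends)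
    (hconn : Mg.Connected ends) (h5 : Mg.TwoFactorsAllC5 ends) :
    ∀ e₁ e₂ e₃ : E, e₁ ≠ e₂ → e₁ ≠ e₃ → e₂ ≠ e₃ →
      ¬ (∀ v w : V, Mg.Reach ends {f | f ≠ e₁ ∧ f ≠ e₂ ∧ f ≠ e₃} v w) →
      ∃ v : V, v ∈ ends e₁ ∧ v ∈ ends e₂ ∧ v ∈ ends e₃ := by
  classical
  intro e₁ e₂ e₃ h12 h13 h23 hcut
  push Not at hcut
  obtain ⟨v, w, hvw⟩ := hcut
  let A : Set V := Mg.component ends {f | f ≠ e₁ ∧ f ≠ e₂ ∧ f ≠ e₃} v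
  have hA : Mg.Closed ends _ A := Mg.closed_component ends _ v
  have hvA : v ∈ A := Relation.ReflTransGen.refl
  have hwA : w ∉ A := hvw
  have hsub : Mg.bd ends Set.univ A ⊆ {e₁, e₂, e₃} := by
    intro g hg
    obtain ⟨_, a, b, ha, hb, hab⟩ := (Mg.mem_bd ..).1 hg
    by_contra hcon
    simp only [Finset.mem_insert, Finset.mem_singleton, not_or] at hcon
    exact hb (hA g hcon a b hab ha)
  have h3 : ({e₁, e₂, e₃} : Finset E).card = 3 := Finset.card_eq_three.2 ⟨_, _, _, h12, h13, h23, rfl⟩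
  have hle := Finset.card_le_card hsub
  have hpos := Finset.card_pos.2 (Finset.nonempty_iff_ne_empty.2 (Mg.bd_pos ends hconn A hvA hwA))
  have hne1 := Mg.bd_ne_one ends hb A
  have hne2 : (Mg.bd ends Set.univ A).card ≠ 2 := by
    intro h2
    obtain ⟨e, f, hef, h⟩ := Finset.card_eq_two.1 h2
    exact Mg.no_two ends hl hc hb h5 A e f hef (by intro g; rw [h]; simp)
  have heq := Finset.eq_of_subset_of_card_le hsub (by omega)
  have hbd : ∀ g, g ∈ Mg.bd ends Set.univ A ↔ g = e₁ ∨ g = e₂ ∨ g = e₃ := by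
    intro g; rw [heq]; simp
  obtain ⟨a0, a1⟩ := Mg.core ends hl hc hb hconn h5 A e₁ e₂ e₃ h12 h13 h23 hbd
  obtain ⟨b0, b1⟩ := Mg.core ends hl hc hb hconn h5 Aᶜ e₁ e₂ e₃ h12 h13 h23
    (by intro g; rw [Mg.bd_compl]; exact hbd g)
  obtain ⟨F, hF, -⟩ := Mg.plesnik ends hl hc hb e₁ e₂
  have hd := Mg.closed_dvd ends h5 F hF _ Set.univ rfl (by intro _ _ _ _ _ _; trivial)
  have hsum := Set.ncard_add_ncard_compl A
  rw [Set.ncard_univ] at hd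
  by_cases h : A.ncard % 5 = 1 ∨ A.ncard % 5 = 2
  · exact a1 h
  · exact b1 (by omega)
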